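/- Let γ = 1/(3L_f) with L_f = L_ψ + L_ω. Let (y_t, z_t, x_t) be the iterates of the VR-TOS algorithm with uniform q-memorization, define the dual iterate u_t = (y_t − z_t)/γ, and the ergodic averages x̄_t = (∑_{k=0}^t x_k)/(t+1), ū_t = (∑_{k=0}^t u_k)/(t+1). Then for every (x,u) ∈ dom g × dom h*, setting y = x + γu and taking any y* ∈ Fix(G_γ), the expected saddle-point suboptimality satisfies E[L(x̄_t, u) − L(x, ū_t)] ≤ (10n/(q(t+1))) · [ (3L_f q/(20n))‖y_0 − y‖² + (3L_f q/(2n))‖y_0 − y*‖² + H_0 ]. -/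

import Mathlib

open Finset
open scoped RealInnerProductSpace

noncomputable section

variable {p : ℕ}

/-- proper, lower semicontinuous, convex extended-real function. -/
structure ProperLscConvex (g : EuclideanSpace ℝ (Fin p) → EReal) : Prop where
  proper : ∃ x, g x ≠ ⊤
  ne_bot : ∀ x, g x ≠ ⊥
  lsc : LowerSemicontinuous g
  convex : ∀ x y : EuclideanSpace ℝ (Fin p), ∀ a b : ℝ, 0 ≤ a → 0 ≤ b → a + b = 1 →
    g (a • x + b • y) ≤ (a : EReal) * g x + (b : EReal) * g y

/-- `z = prox_{γ g}(x)`. -/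
def IsProx (γ : ℝ) (g : EuclideanSpace ℝ (Fin p) → EReal) (x z : EuclideanSpace ℝ (Fin p)) : Prop :=
  ∀ w, g z + (((1 / (2 * γ)) * ‖x - z‖ ^ 2 : ℝ) : EReal)
      ≤ g w + (((1 / (2 * γ)) * ‖x - w‖ ^ 2 : ℝ) : EReal)

/-- Fenchel conjugate. -/
def fconj (g : EuclideanSpace ℝ (Fin p) → EReal) (u : EuclideanSpace ℝ (Fin p)) : EReal :=
  ⨆ x, ((⟪x, u⟫ : ℝ) : EReal) - g x

/-- The Lagrangian `L(x, u) = f(x) + g(x) + ⟨x, u⟩ − h*(u)`. -/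
def Lagr (f : EuclideanSpace ℝ (Fin p) → ℝ) (g h : EuclideanSpace ℝ (Fin p) → EReal)
    (x u : EuclideanSpace ℝ (Fin p)) : EReal :=
  ((f x : ℝ) : EReal) + g x + ((⟪x, u⟫ : ℝ) : EReal) - fconj h u

/-- extension of a finite sequence of draws to an infinite one. -/
def extSeq {S : Type} [Inhabited S] (T : ℕ) (v : Fin T → S) : ℕ → S :=
  fun k => if hk : k < T then v ⟨k, hk⟩ else default

/-- probability of a finite sequence of independent draws with weights `w`. -/
def prodW {S : Type} [Fintype S] (w : S → ℝ) (T : ℕ) (v : Fin T → S) : ℝ :=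
  ∏ k, w (v k)

lemma aux_hasDeriv {F : EuclideanSpace ℝ (Fin p) → ℝ}
    {G : EuclideanSpace ℝ (Fin p) → EuclideanSpace ℝ (Fin p)}
    (hd : ∀ x, HasGradientAt F (G x) x) (x d : EuclideanSpace ℝ (Fin p)) (t : ℝ) :
    HasDerivAt (fun t : ℝ => F (x + t • d)) ⟪G (x + t • d), d⟫ t := by
  have h1 : HasDerivAt (fun t : ℝ => x + t • d) d t := by
    simpa using ((hasDerivAt_id t).smul_const d).const_add x
  have h2 := (hd (x + t • d)).hasFDerivAt.comp_hasDerivAt t h1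
  rw [InnerProductSpace.toDual_apply_apply] at h2
  exact h2

lemma aux_first_order {F : EuclideanSpace ℝ (Fin p) → ℝ}
    {G : EuclideanSpace ℝ (Fin p) → EuclideanSpace ℝ (Fin p)}
    (hc : ConvexOn ℝ Set.univ F)
    (hd : ∀ x, HasGradientAt F (G x) x) (x y : EuclideanSpace ℝ (Fin p)) :
    F x + ⟪G x, y - x⟫ ≤ F y := by
  have h1 := aux_hasDeriv hd x (y - x) 0
  have hc' : ConvexOn ℝ Set.univ (fun t : ℝ => F (x + t • (y - x))) := by
    refine ⟨convex_univ, fun a _ b _ c d hc0 hd0 hcd => ?_⟩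
    have := hc.2 (Set.mem_univ (x + a • (y - x))) (Set.mem_univ (x + b • (y - x))) hc0 hd0 hcd
    refine le_trans (le_of_eq ?_) this
    change F _ = F _
    congr 1
    obtain rfl : c = 1 - d := by linarith
    simp only [smul_eq_mul]
    module
  have h2 := hc'.le_slope_of_hasDerivAt (Set.mem_univ 0) (Set.mem_univ 1) zero_lt_one h1
  simp [slope_def_field] at h2
  linarith

lemma aux_descent {F : EuclideanSpace ℝ (Fin p) → ℝ}
    {G : EuclideanSpace ℝ (Fin p) → EuclideanSpace ℝ (Fin p)} {L : ℝ}
    (hd : ∀ x, HasGradientAt F (G x) x)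
    (hl : ∀ x y, ‖G x - G y‖ ≤ L * ‖x - y‖) (x y : EuclideanSpace ℝ (Fin p)) :
    F y ≤ F x + ⟪G x, y - x⟫ + L / 2 * ‖y - x‖ ^ 2 := by
  have h1 := fun t => aux_hasDeriv hd x (y - x) t
  have hB : ∀ t : ℝ, HasDerivAt (fun t : ℝ => F x + t * ⟪G x, y - x⟫ + L / 2 * t ^ 2 * ‖y - x‖ ^ 2)
      (⟪G x, y - x⟫ + L * t * ‖y - x‖ ^ 2) t := by
    intro t
    have := (((hasDerivAt_id t).mul_const ⟪G x, y - x⟫).const_add (F x)).add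
      ((((hasDerivAt_id t).pow 2).const_mul (L / 2)).mul_const (‖y - x‖ ^ 2))
    refine this.congr_deriv ?_
    simp only [id, Nat.cast_ofNat, Nat.add_one_sub_one, pow_one]
    ring
  have := image_le_of_deriv_right_le_deriv_boundary (a := 0) (b := 1)
    (f := fun t : ℝ => F (x + t • (y - x)))
    (fun t _ => (h1 t).continuousAt.continuousWithinAt)
    (fun t _ => (h1 t).hasDerivWithinAt)
    (B := fun t : ℝ => F x + t * ⟪G x, y - x⟫ + L / 2 * t ^ 2 * ‖y - x‖ ^ 2) (by simp)
    (fun t _ => (hB t).continuousAt.continuousWithinAt)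
    (fun t _ => (hB t).hasDerivWithinAt) (by
      intro t ht
      have h3 : ⟪G (x + t • (y - x)) - G x, y - x⟫ ≤ L * t * ‖y - x‖ ^ 2 := by
        refine (real_inner_le_norm _ _).trans ?_
        have h4 := hl (x + t • (y - x)) x
        rw [add_sub_cancel_left, norm_smul, Real.norm_of_nonneg ht.1] at h4
        nlinarith [mul_le_mul_of_nonneg_right h4 (norm_nonneg (y - x))]
      rw [inner_sub_left] at h3
      linarith) (Set.right_mem_Icc.2 zero_le_one)
  simpa using this

lemma aux_breg {F : EuclideanSpace ℝ (Fin p) → ℝ}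
    {G : EuclideanSpace ℝ (Fin p) → EuclideanSpace ℝ (Fin p)} {L : ℝ} (hL : 0 < L)
    (hc : ConvexOn ℝ Set.univ F)
    (hd : ∀ x, HasGradientAt F (G x) x)
    (hl : ∀ x y, ‖G x - G y‖ ≤ L * ‖x - y‖) (x y : EuclideanSpace ℝ (Fin p)) :
    ‖G y - G x‖ ^ 2 ≤ 2 * L * (F y - F x - ⟪G x, y - x⟫) := by
  have h1 := aux_first_order hc hd x (y - L⁻¹ • (G y - G x))
  have h2 := aux_descent hd hl y (y - L⁻¹ • (G y - G x))
  have e : y - L⁻¹ • (G y - G x) - y = - (L⁻¹ • (G y - G x)) := by abel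
  have e' : y - L⁻¹ • (G y - G x) - x = (y - x) - (L⁻¹ • (G y - G x)) := by abel
  rw [e, norm_neg, norm_smul, inner_neg_right, inner_smul_right, Real.norm_of_nonneg (by positivity)] at h2
  rw [e', inner_sub_right, inner_smul_right] at h1
  have h3 : ⟪G y, G y - G x⟫ - ⟪G x, G y - G x⟫ = ‖G y - G x‖ ^ 2 := by
    rw [← inner_sub_left, real_inner_self_eq_norm_sq]
  have h4 : F x + ⟪G x, y - x⟫ + L⁻¹ * ‖G y - G x‖ ^ 2
      ≤ F y + L / 2 * (L⁻¹ * ‖G y - G x‖) ^ 2 := by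
    rw [← h3]; rw [← h3] at *; linarith
  have h5 : L / 2 * (L⁻¹ * ‖G y - G x‖) ^ 2 = L⁻¹ * ‖G y - G x‖ ^ 2 / 2 := by
    field_simp
  have h6 : L⁻¹ * ‖G y - G x‖ ^ 2 ≤ 2 * (F y - F x - ⟪G x, y - x⟫) := by linarith
  rw [inv_mul_le_iff₀ hL] at h6
  linarith

lemma aux_coco {F : EuclideanSpace ℝ (Fin p) → ℝ}
    {G : EuclideanSpace ℝ (Fin p) → EuclideanSpace ℝ (Fin p)} {L : ℝ} (hL : 0 < L)
    (hc : ConvexOn ℝ Set.univ F)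
    (hd : ∀ x, HasGradientAt F (G x) x)
    (hl : ∀ x y, ‖G x - G y‖ ≤ L * ‖x - y‖) (x y : EuclideanSpace ℝ (Fin p)) :
    ‖G x - G y‖ ^ 2 ≤ L * ⟪G x - G y, x - y⟫ := by
  have h1 := aux_breg hL hc hd hl x y
  have h2 := aux_breg hL hc hd hl y x
  rw [norm_sub_rev] at h1
  rw [inner_sub_left]
  rw [← neg_sub x y, inner_neg_right] at h1
  nlinarith

lemma aux_mono {F : EuclideanSpace ℝ (Fin p) → ℝ}
    {G : EuclideanSpace ℝ (Fin p) → EuclideanSpace ℝ (Fin p)}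
    (hc : ConvexOn ℝ Set.univ F)
    (hd : ∀ x, HasGradientAt F (G x) x) (x y : EuclideanSpace ℝ (Fin p)) :
    0 ≤ ⟪G x - G y, x - y⟫ := by
  have h1 := aux_first_order hc hd x y
  have h2 := aux_first_order hc hd y x
  rw [inner_sub_left]
  rw [← neg_sub x y, inner_neg_right] at h1
  linarith

lemma aux_real_le (A B C : ℝ) (h : ∀ l : ℝ, 0 < l → l ≤ 1 → A ≤ B + l * C) : A ≤ B := by
  by_contra hlt
  push Not at hlt
  have hC : 0 < |C| + 1 := by positivity
  have hl : 0 < min 1 ((A - B) / (2 * (|C| + 1))) := by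
    apply lt_min one_pos; apply div_pos <;> linarith
  have h1 := h _ hl (min_le_left _ _)
  have h2 := min_le_right 1 ((A - B) / (2 * (|C| + 1)))
  rw [le_div_iff₀ (by linarith)] at h2
  have h3 := mul_le_mul_of_nonneg_left (le_abs_self C) hl.le
  nlinarith

lemma aux_prox_ne_top {γ : ℝ} {g : EuclideanSpace ℝ (Fin p) → EReal} (hg : ProperLscConvex g)
    {x z : EuclideanSpace ℝ (Fin p)} (hp : IsProx γ g x z) : g z ≠ ⊤ := by
  obtain ⟨w, hw⟩ := hg.proper
  intro h
  have := hp w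
  rw [h] at this
  lift g w to ℝ using ⟨hw, hg.ne_bot w⟩ with b
  rw [EReal.top_add_coe, ← EReal.coe_add] at this
  exact EReal.coe_ne_top _ (top_le_iff.1 this)

lemma aux_convexOn {g : EuclideanSpace ℝ (Fin p) → EReal} (hg : ProperLscConvex g) :
    ConvexOn ℝ {x | g x ≠ ⊤} (fun x => (g x).toReal) := by
  have key : ∀ x ∈ {x | g x ≠ ⊤}, ∀ y ∈ {x | g x ≠ ⊤}, ∀ a b : ℝ, 0 ≤ a → 0 ≤ b → a + b = 1 →
      g (a • x + b • y) ≤ ((a * (g x).toReal + b * (g y).toReal : ℝ) : EReal) := by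
    intro x hx y hy a b ha hb hab
    have := hg.convex x y a b ha hb hab
    rw [← EReal.coe_toReal hx (hg.ne_bot x), ← EReal.coe_toReal hy (hg.ne_bot y)] at this
    simpa using this
  refine ⟨fun x hx y hy a b ha hb hab => ?_, fun x hx y hy a b ha hb hab => ?_⟩
  · exact ne_top_of_le_ne_top (EReal.coe_ne_top _) (key x hx y hy a b ha hb hab)
  · have h := key x hx y hy a b ha hb hab
    have h' := ne_top_of_le_ne_top (EReal.coe_ne_top _) h
    rw [← EReal.coe_toReal h' (hg.ne_bot _)] at h
    simpa using EReal.coe_le_coe_iff.1 h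

lemma aux_prox {γ : ℝ} (hγ : 0 < γ) {g : EuclideanSpace ℝ (Fin p) → EReal} (hg : ProperLscConvex g)
    {x z : EuclideanSpace ℝ (Fin p)} (hp : IsProx γ g x z) {w : EuclideanSpace ℝ (Fin p)}
    (hw : g w ≠ ⊤) :
    (g z).toReal + ⟪γ⁻¹ • (x - z), w - z⟫ ≤ (g w).toReal := by
  have hz := aux_prox_ne_top hg hp
  have hc := aux_convexOn hg
  have : (g z).toReal + γ⁻¹ * ⟪x - z, w - z⟫ - (g w).toReal ≤ 0 := by
    refine aux_real_le _ _ (1 / (2 * γ) * ‖w - z‖ ^ 2) fun l hl hl1 => ?_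
    have hm : (1 - l) • z + l • w ∈ {x | g x ≠ ⊤} :=
      hc.1 hz hw (by linarith) hl.le (by ring)
    have h1 := hc.2 hz hw (by linarith : 0 ≤ 1 - l) hl.le (by ring)
    have h2 := hp ((1 - l) • z + l • w)
    rw [← EReal.coe_toReal hz (hg.ne_bot z), ← EReal.coe_toReal hm (hg.ne_bot _),
      ← EReal.coe_add, ← EReal.coe_add, EReal.coe_le_coe_iff] at h2
    have e : x - ((1 - l) • z + l • w) = (x - z) - l • (w - z) := by module
    rw [e, norm_sub_sq_real (x - z) (l • (w - z)), inner_smul_right, norm_smul, Real.norm_of_nonneg hl.le] at h2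
    simp only [smul_eq_mul] at h1
    have h3 : l * ((g z).toReal + γ⁻¹ * ⟪x - z, w - z⟫ - (g w).toReal)
        ≤ l * (0 + l * (1 / (2 * γ) * ‖w - z‖ ^ 2)) := by
      have e2 : 1 / (2 * γ) * (‖x - z‖ ^ 2 - 2 * (l * ⟪x - z, w - z⟫) + (l * ‖w - z‖) ^ 2)
        = 1 / (2 * γ) * ‖x - z‖ ^ 2 - l * (γ⁻¹ * ⟪x - z, w - z⟫)
          + l * (l * (1 / (2 * γ) * ‖w - z‖ ^ 2)) := by
        field_simp
      rw [e2] at h2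
      nlinarith
    exact le_of_mul_le_mul_left h3 hl
  rw [real_inner_smul_left]
  linarith

lemma aux_fconj_ge {h : EuclideanSpace ℝ (Fin p) → EReal} {z : EuclideanSpace ℝ (Fin p)}
    (hz : h z ≠ ⊤) (hb : h z ≠ ⊥) (u : EuclideanSpace ℝ (Fin p)) :
    ((⟪z, u⟫ - (h z).toReal : ℝ) : EReal) ≤ fconj h u := by
  refine le_trans (le_of_eq ?_) (le_iSup (fun x => ((⟪x, u⟫ : ℝ) : EReal) - h x) z)
  rw [EReal.coe_sub, EReal.coe_toReal hz hb]

lemma aux_fconj_le {h : EuclideanSpace ℝ (Fin p) → EReal} (hh : ProperLscConvex h)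
    (u : EuclideanSpace ℝ (Fin p)) (c : ℝ)
    (hc : ∀ x, h x ≠ ⊤ → ⟪x, u⟫ - (h x).toReal ≤ c) : fconj h u ≤ (c : EReal) := by
  refine iSup_le fun x => ?_
  by_cases hx : h x = ⊤
  · rw [hx]; simp
  · rw [← EReal.coe_toReal hx (hh.ne_bot x), ← EReal.coe_sub, EReal.coe_le_coe_iff]
    exact hc x hx

lemma aux_three (a b c : EuclideanSpace ℝ (Fin p)) :
    2 * ⟪b - a, c - b⟫ = ‖a - c‖ ^ 2 - ‖b - c‖ ^ 2 - ‖b - a‖ ^ 2 := by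
  simp only [← real_inner_self_eq_norm_sq, inner_sub_left, inner_sub_right]
  rw [real_inner_comm a b, real_inner_comm a c, real_inner_comm b c]
  ring

lemma aux_young {L : ℝ} (hL : 0 < L) (a b : EuclideanSpace ℝ (Fin p)) :
    ⟪a, b⟫ ≤ 1 / (4 * L) * ‖a‖ ^ 2 + L * ‖b‖ ^ 2 := by
  have h1 := real_inner_le_norm a b
  have h2 : 1 / (4 * L) * ‖a‖ ^ 2 + L * ‖b‖ ^ 2 - ‖a‖ * ‖b‖ = 1 / (4 * L) * (‖a‖ - 2 * L * ‖b‖) ^ 2 := by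
    field_simp
    ring
  have h3 : 0 ≤ 1 / (4 * L) * (‖a‖ - 2 * L * ‖b‖) ^ 2 := by positivity
  linarith

lemma aux_step1 {Lf γ : ℝ} (hL : 0 < Lf) (hγ : γ = 1 / (3 * Lf))
    (y z X v D xx uu : EuclideanSpace ℝ (Fin p)) (fX fz fxx gX gxx hz d : ℝ)
    (hg : gX + ⟪γ⁻¹ • (2 • z - y - γ • v - X), xx - X⟫ ≤ gxx)
    (hf1 : fX ≤ fz + ⟪D, X - z⟫ + Lf / 2 * ‖X - z‖ ^ 2)
    (hf2 : fz + ⟪D, xx - z⟫ ≤ fxx)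
    (hd : ⟪z, uu⟫ - hz ≤ d) :
    fX + gX + ⟪X, uu⟫ - d - (fxx + gxx + ⟪xx, γ⁻¹ • (y - z)⟫ - (⟪z, γ⁻¹ • (y - z)⟫ - hz))
      ≤ 3 * Lf / 2 * (‖y - (xx + γ • uu)‖ ^ 2 - ‖y + X - z - (xx + γ • uu)‖ ^ 2)
        + ⟪D - v, z - xx⟫ + 1 / (4 * Lf) * ‖D - v‖ ^ 2 := by
  have hγ0 : γ ≠ 0 := by rw [hγ]; positivity
  obtain ⟨u, hu⟩ : ∃ u, y = z + γ • u := ⟨γ⁻¹ • (y - z), by rw [smul_smul, mul_inv_cancel₀ hγ0]; simp⟩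
  have e1 : γ⁻¹ • (y - z) = u := by rw [hu, add_sub_cancel_left, smul_smul, inv_mul_cancel₀ hγ0, one_smul]
  have e2 : γ⁻¹ • (2 • z - y - γ • v - X) = γ⁻¹ • (z - X) - u - v := by
    have : 2 • z - y - γ • v - X = (z - X) - γ • u - γ • v := by rw [hu, two_nsmul]; abel
    rw [this, smul_sub, smul_sub, smul_smul, smul_smul, inv_mul_cancel₀ hγ0, one_smul, one_smul]
  rw [e1]
  rw [e2] at hg
  have h3 := aux_three y (y + X - z) (xx + γ • uu)
  have e3 : y + X - z - y = X - z := by abel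
  have e4 : xx + γ • uu - (y + X - z) = (xx - X) + γ • (uu - u) := by rw [hu, smul_sub]; abel
  rw [e3, e4] at h3
  have hy := aux_young hL (D - v) (X - z)
  have e5 : γ⁻¹ = 3 * Lf := by rw [hγ]; simp
  have h4 : γ⁻¹ * (2 * ⟪X - z, xx - X + γ • (uu - u)⟫) =
     2 * (γ⁻¹ * ⟪X - z, xx - X⟫ + ⟪X - z, uu - u⟫) := by
    rw [inner_add_right, real_inner_smul_right]
    field_simp
  rw [h3, e5] at h4
  rw [e5] at hg
  simp only [inner_sub_left, inner_sub_right, real_inner_smul_left] at *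
  rw [real_inner_comm xx u, real_inner_comm X u] at *
  nlinarith

lemma aux_step2 {Lf γ : ℝ} (hL : 0 < Lf) (hγ : γ = 1 / (3 * Lf))
    (y z X v Ds ys zs : EuclideanSpace ℝ (Fin p)) (gX gs hz hs : ℝ)
    (hg : gX + ⟪γ⁻¹ • (2 • z - y - γ • v - X), zs - X⟫ ≤ gs)
    (hg' : gs + ⟪γ⁻¹ • (2 • zs - ys - γ • Ds - zs), X - zs⟫ ≤ gX)
    (hh : hz + ⟪γ⁻¹ • (y - z), zs - z⟫ ≤ hs)
    (hh' : hs + ⟪γ⁻¹ • (ys - zs), z - zs⟫ ≤ hz) :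
    ⟪v - Ds, z - zs⟫ - 1 / (6 * Lf) * ‖v - Ds‖ ^ 2
      ≤ 3 * Lf / 2 * (‖y - ys‖ ^ 2 - ‖y + X - z - ys‖ ^ 2) := by
  have hγ0 : γ ≠ 0 := by rw [hγ]; positivity
  obtain ⟨u, hu⟩ : ∃ u, y = z + γ • u := ⟨γ⁻¹ • (y - z), by rw [smul_smul, mul_inv_cancel₀ hγ0]; simp⟩
  obtain ⟨us, hus⟩ : ∃ u, ys = zs + γ • u :=
    ⟨γ⁻¹ • (ys - zs), by rw [smul_smul, mul_inv_cancel₀ hγ0]; simp⟩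
  have e1 : γ⁻¹ • (y - z) = u := by rw [hu, add_sub_cancel_left, smul_smul, inv_mul_cancel₀ hγ0, one_smul]
  have e1' : γ⁻¹ • (ys - zs) = us := by
    rw [hus, add_sub_cancel_left, smul_smul, inv_mul_cancel₀ hγ0, one_smul]
  have e2 : γ⁻¹ • (2 • z - y - γ • v - X) = γ⁻¹ • (z - X) - u - v := by
    have : 2 • z - y - γ • v - X = (z - X) - γ • u - γ • v := by rw [hu, two_nsmul]; abel
    rw [this, smul_sub, smul_sub, smul_smul, smul_smul, inv_mul_cancel₀ hγ0, one_smul, one_smul]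
  have e2' : γ⁻¹ • (2 • zs - ys - γ • Ds - zs) = - us - Ds := by
    have : 2 • zs - ys - γ • Ds - zs = - (γ • us) - γ • Ds := by rw [hus, two_nsmul]; abel
    rw [this, smul_sub, smul_neg, smul_smul, smul_smul, inv_mul_cancel₀ hγ0, one_smul, one_smul]
  rw [e2] at hg
  rw [e2'] at hg'
  rw [e1] at hh
  rw [e1'] at hh'
  have h3 := aux_three y (y + X - z) ys
  have e3 : y + X - z - y = X - z := by abel
  have e4 : ys - (y + X - z) = (zs - X) + γ • (us - u) := by rw [hu, hus, smul_sub]; abel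
  rw [e3, e4] at h3
  have hy := aux_young (L := 3 * Lf / 2) (by positivity) (v - Ds) (z - X)
  have e6 : 1 / (4 * (3 * Lf / 2)) = 1 / (6 * Lf) := by congr 1; ring
  rw [e6, norm_sub_rev z X] at hy
  have e5 : γ⁻¹ = 3 * Lf := by rw [hγ]; simp
  have h4 : γ⁻¹ * (2 * ⟪X - z, zs - X + γ • (us - u)⟫) =
     2 * (γ⁻¹ * ⟪X - z, zs - X⟫ + ⟪X - z, us - u⟫) := by
    rw [inner_add_right, real_inner_smul_right]
    field_simp
  rw [h3, e5] at h4
  rw [e5] at hg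
  simp only [inner_sub_left, inner_sub_right, real_inner_smul_left, inner_neg_left] at *
  simp only [real_inner_comm us, real_inner_comm u] at *
  nlinarith

lemma aux_var {n : ℕ} (hn : 0 < n) (b : Fin n → EuclideanSpace ℝ (Fin p)) :
    ∑ i, ‖b i - (n : ℝ)⁻¹ • ∑ j, b j‖ ^ 2 ≤ ∑ i, ‖b i‖ ^ 2 := by
  have hn' : (0 : ℝ) < n := by exact_mod_cast hn
  set m := (n : ℝ)⁻¹ • ∑ j, b j with hm
  have hs : ∑ j, b j = (n : ℝ) • m := by rw [hm, smul_smul, mul_inv_cancel₀ hn'.ne', one_smul]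
  have : ∑ i, ‖b i - m‖ ^ 2 = ∑ i, ‖b i‖ ^ 2 - n * ‖m‖ ^ 2 := by
    simp only [norm_sub_sq_real, sum_add_distrib, sum_sub_distrib, ← mul_sum, ← sum_inner, hs,
      real_inner_smul_left, real_inner_self_eq_norm_sq]
    simp
    ring
  rw [this]
  have : 0 ≤ (n : ℝ) * ‖m‖ ^ 2 := by positivity
  linarith

lemma aux_sq2 (a b : EuclideanSpace ℝ (Fin p)) : ‖a - b‖ ^ 2 ≤ 2 * ‖a‖ ^ 2 + 2 * ‖b‖ ^ 2 := by
  have h1 := norm_sub_sq_real a b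
  have h2 := norm_add_sq_real a b
  nlinarith [sq_nonneg ‖a + b‖]

lemma aux_avg {n : ℕ} (hn : 0 < n) {Lf : ℝ} (hL : 0 < Lf)
    (P Q a : Fin n → EuclideanSpace ℝ (Fin p)) (W Ws d e D Ds : EuclideanSpace ℝ (Fin p))
    (v : Fin n → EuclideanSpace ℝ (Fin p))
    (hv : ∀ i, v i = P i - a i + (n : ℝ)⁻¹ • ∑ j, a j + W)
    (hD : D = (n : ℝ)⁻¹ • ∑ j, P j + W) (hDs : Ds = (n : ℝ)⁻¹ • ∑ j, Q j + Ws)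
    (hA : ∀ i, ‖P i + W - (Q i + Ws)‖ ^ 2 ≤ Lf * ⟪P i + W - (Q i + Ws), d⟫)
    (hG : ∀ i, ‖P i - Q i‖ ^ 2 ≤ Lf * ⟪P i - Q i, d⟫)
    (hW : 0 ≤ ⟪W - Ws, d⟫) :
    ∑ i, (⟪D - v i, e⟫ + 1 / (4 * Lf) * ‖D - v i‖ ^ 2
        - 10 * (⟪v i - Ds, d⟫ - 1 / (6 * Lf) * ‖v i - Ds‖ ^ 2))
      + 5 / Lf * (∑ i, ‖P i - Q i‖ ^ 2 - ∑ i, ‖a i - Q i‖ ^ 2) ≤ 0 := by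
  have hn' : (0 : ℝ) < n := by exact_mod_cast hn
  have hsum : ∀ b : Fin n → EuclideanSpace ℝ (Fin p), ∑ i, (b i - (n : ℝ)⁻¹ • ∑ j, b j) = 0 := by
    intro b
    rw [sum_sub_distrib, sum_const, card_univ, Fintype.card_fin, ← Nat.cast_smul_eq_nsmul ℝ,
      smul_smul, mul_inv_cancel₀ hn'.ne', one_smul, sub_self]
  have e1 : ∀ i, D - v i = (a i - P i) - (n : ℝ)⁻¹ • ∑ j, (a j - P j) := by
    intro i
    rw [hv, hD, sum_sub_distrib, smul_sub]; abel
  have e2 : ∀ i, v i - Ds = (P i + W - (Q i + Ws)) - ((a i - Q i) - (n : ℝ)⁻¹ • ∑ j, (a j - Q j)) := by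
    intro i
    rw [hv, hDs, sum_sub_distrib, smul_sub]; abel
  have i1 : ∑ i, ⟪D - v i, e⟫ = 0 := by
    rw [← sum_inner]
    simp_rw [e1]
    rw [hsum (fun i => a i - P i), inner_zero_left]
  have i2 : ∑ i, ⟪v i - Ds, d⟫ = ∑ i, ⟪P i + W - (Q i + Ws), d⟫ := by
    rw [← sum_inner, ← sum_inner]
    simp_rw [e2]
    rw [sum_sub_distrib, hsum (fun i => a i - Q i), sub_zero]
  have i3 : ∑ i, ‖D - v i‖ ^ 2 ≤ 2 * ∑ i, ‖a i - Q i‖ ^ 2 + 2 * ∑ i, ‖P i - Q i‖ ^ 2 := by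
    simp_rw [e1]
    refine (aux_var hn (fun i => a i - P i)).trans ?_
    rw [mul_sum, mul_sum, ← sum_add_distrib]
    refine sum_le_sum fun i _ => ?_
    have := aux_sq2 (a i - Q i) (P i - Q i)
    simpa using this
  have i4 : ∑ i, ‖v i - Ds‖ ^ 2 ≤ 2 * ∑ i, ‖P i + W - (Q i + Ws)‖ ^ 2 + 2 * ∑ i, ‖a i - Q i‖ ^ 2 := by
    have h1 := aux_var hn (fun i => a i - Q i)
    refine le_trans (b := 2 * ∑ i, ‖P i + W - (Q i + Ws)‖ ^ 2
      + 2 * ∑ i, ‖(a i - Q i) - (n : ℝ)⁻¹ • ∑ j, (a j - Q j)‖ ^ 2) ?_ (by linarith)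
    rw [mul_sum, mul_sum, ← sum_add_distrib]
    refine sum_le_sum fun i _ => ?_
    rw [e2]
    exact aux_sq2 _ _
  have i5 : ∑ i, ‖P i + W - (Q i + Ws)‖ ^ 2 ≤ Lf * ∑ i, ⟪P i + W - (Q i + Ws), d⟫ := by
    rw [mul_sum]; exact sum_le_sum fun i _ => hA i
  have i6 : ∑ i, ‖P i - Q i‖ ^ 2 ≤ Lf * ∑ i, ⟪P i + W - (Q i + Ws), d⟫ := by
    rw [mul_sum]
    refine sum_le_sum fun i _ => (hG i).trans (mul_le_mul_of_nonneg_left ?_ hL.le)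
    have : P i + W - (Q i + Ws) = (P i - Q i) + (W - Ws) := by abel
    rw [this, inner_add_left]; linarith
  have i7 : 0 ≤ ∑ i, ‖a i - Q i‖ ^ 2 := sum_nonneg fun i _ => by positivity
  have i8 : 0 ≤ ∑ i, ‖P i + W - (Q i + Ws)‖ ^ 2 := sum_nonneg fun i _ => by positivity
  simp only [sum_add_distrib, sum_sub_distrib, ← mul_sum, i1, i2]
  generalize ∑ i, ‖D - v i‖ ^ 2 = s1 at *
  generalize ∑ i, ‖v i - Ds‖ ^ 2 = s2 at *
  generalize ∑ i, ‖a i - Q i‖ ^ 2 = H at *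
  generalize ∑ i, ‖P i - Q i‖ ^ 2 = G at *
  generalize ∑ i, ‖P i + W - (Q i + Ws)‖ ^ 2 = A at *
  generalize ∑ i, ⟪P i + W - (Q i + Ws), d⟫ = M at *
  have key : 0 + 1 / (4 * Lf) * s1 - 10 * (M - 1 / (6 * Lf) * s2) + 5 / Lf * (G - H)
    = (s1 / 4 - 10 * (Lf * M) + 10 / 6 * s2 + 5 * (G - H)) / Lf := by
    field_simp
    ring
  rw [key]
  apply div_nonpos_of_nonpos_of_nonneg _ hL.le
  linarith

lemma aux_sel {n : ℕ} {S : Type} [Fintype S] (w : S → ℝ) (sel : S → Fin n)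
    (hmargsel : ∀ i : Fin n, ∑ s ∈ univ.filter (fun s => sel s = i), w s = 1 / n)
    (φ : Fin n → ℝ) : ∑ s, w s * φ (sel s) = (n : ℝ)⁻¹ * ∑ i, φ i := by
  rw [← sum_fiberwise univ sel, mul_sum]
  refine sum_congr rfl fun i _ => ?_
  rw [← one_div, ← hmargsel i, sum_mul]
  refine sum_congr rfl fun s hs => ?_
  rw [(mem_filter.1 hs).2]

lemma aux_upd {n : ℕ} {S : Type} [Fintype S] (w : S → ℝ) (hw1 : ∑ s, w s = 1)
    (upd : S → Finset (Fin n)) (q : ℝ)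
    (hmargupd : ∀ j : Fin n, ∑ s ∈ univ.filter (fun s => j ∈ upd s), w s = q / n)
    (j : Fin n) (A B : ℝ) :
    ∑ s, w s * (if j ∈ upd s then A else B) = q / n * A + (1 - q / n) * B := by
  rw [← hmargupd j]
  have : ∀ s, w s * (if j ∈ upd s then A else B) = w s * B + (if j ∈ upd s then w s else 0) * (A - B) := by
    intro s; split_ifs <;> ring
  simp_rw [this]
  rw [sum_add_distrib, ← sum_mul, ← sum_mul, hw1, ← sum_filter]
  ring

lemma aux_extSeq_update {S : Type} [Inhabited S] (T : ℕ) (v : Fin T → S) (k : Fin T) (s : S) :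
    extSeq T (Function.update v k s) = Function.update (extSeq T v) k.1 s := by
  funext m
  unfold extSeq
  by_cases hm : m < T
  · by_cases hk : m = k.1
    · subst hk; simp
    · have : (⟨m, hm⟩ : Fin T) ≠ k := fun h => hk (by rw [← h])
      simp [hm, hk, this]
  · have : m ≠ k.1 := fun h => hm (h ▸ k.2)
    simp [hm, this]

lemma aux_resample {S : Type} [Fintype S] [Inhabited S] (w : S → ℝ) (hw1 : ∑ s, w s = 1)
    (T : ℕ) (k : ℕ) (hk : k < T) (F : (ℕ → S) → ℝ) :
    ∑ v : Fin T → S, prodW w T v * F (extSeq T v)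
      = ∑ v : Fin T → S, prodW w T v * ∑ s, w s * F (Function.update (extSeq T v) k s) := by
  have hw : ∀ (v : Fin T → S) (s : S), prodW w T v * w s
      = prodW w T (Function.update v ⟨k, hk⟩ s) * w (v ⟨k, hk⟩) := by
    intro v s
    unfold prodW
    rw [← Finset.mul_prod_erase univ (fun j => w (v j)) (mem_univ ⟨k, hk⟩),
      ← Finset.mul_prod_erase univ (fun j => w (Function.update v ⟨k, hk⟩ s j)) (mem_univ ⟨k, hk⟩)]
    have : ∏ j ∈ univ.erase (⟨k, hk⟩ : Fin T), w (Function.update v ⟨k, hk⟩ s j)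
        = ∏ j ∈ univ.erase (⟨k, hk⟩ : Fin T), w (v j) :=
      prod_congr rfl fun j hj => by rw [Function.update_of_ne (ne_of_mem_erase hj)]
    rw [this, Function.update_self]
    ring
  have h1 : ∑ v : Fin T → S, prodW w T v * F (extSeq T v)
      = ∑ vs : (Fin T → S) × S, prodW w T vs.1 * w vs.2 * F (extSeq T vs.1) := by
    rw [Fintype.sum_prod_type]
    refine sum_congr rfl fun v _ => ?_
    dsimp only
    rw [← sum_mul, ← mul_sum, hw1, mul_one]
  have h2 : ∑ v : Fin T → S, prodW w T v * ∑ s, w s * F (Function.update (extSeq T v) k s)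
      = ∑ vs : (Fin T → S) × S, prodW w T vs.1 * w vs.2
          * F (extSeq T (Function.update vs.1 ⟨k, hk⟩ vs.2)) := by
    rw [Fintype.sum_prod_type]
    refine sum_congr rfl fun v _ => ?_
    rw [mul_sum]
    refine sum_congr rfl fun s _ => ?_
    rw [aux_extSeq_update]
    ring
  rw [h1, h2]
  have hinv : Function.Involutive (fun vs : (Fin T → S) × S =>
      (Function.update vs.1 ⟨k, hk⟩ vs.2, vs.1 ⟨k, hk⟩)) := by
    intro vs
    simp
  refine (Fintype.sum_equiv hinv.toPerm _ _ fun vs => ?_).symm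
  change _ = prodW w T (Function.update vs.1 ⟨k, hk⟩ vs.2) * w (vs.1 ⟨k, hk⟩) * _
  rw [hw]
  rfl

lemma aux_coe_sum {ι : Type*} (s : Finset ι) (f : ι → ℝ) :
    ((∑ i ∈ s, f i : ℝ) : EReal) = ∑ i ∈ s, ((f i : ℝ) : EReal) := by
  classical
  induction s using Finset.induction_on with
  | empty => simp
  | insert a s ha ih => rw [sum_insert ha, sum_insert ha, EReal.coe_add, ih]

lemma aux_f {n : ℕ} (hn : 0 < n)
    (ψ : Fin n → EuclideanSpace ℝ (Fin p) → ℝ)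
    (gradψ : Fin n → EuclideanSpace ℝ (Fin p) → EuclideanSpace ℝ (Fin p))
    (Lψ : ℝ)
    (hψconv : ∀ i, ConvexOn ℝ Set.univ (ψ i))
    (hψdiff : ∀ i x, HasGradientAt (ψ i) (gradψ i x) x)
    (hψlip : ∀ i x y, ‖gradψ i x - gradψ i y‖ ≤ Lψ * ‖x - y‖)
    (ω : EuclideanSpace ℝ (Fin p) → ℝ)
    (gradω : EuclideanSpace ℝ (Fin p) → EuclideanSpace ℝ (Fin p))
    (Lω : ℝ)
    (hωconv : ConvexOn ℝ Set.univ ω)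
    (hωdiff : ∀ x, HasGradientAt ω (gradω x) x)
    (hωlip : ∀ x y, ‖gradω x - gradω y‖ ≤ Lω * ‖x - y‖)
    (Lf : ℝ) (hLf : Lf = Lψ + Lω)
    (f : EuclideanSpace ℝ (Fin p) → ℝ)
    (hf : ∀ x, f x = (n : ℝ)⁻¹ * ∑ j, ψ j x + ω x)
    (gradf : EuclideanSpace ℝ (Fin p) → EuclideanSpace ℝ (Fin p))
    (hgradf : ∀ x, gradf x = (n : ℝ)⁻¹ • ∑ j, gradψ j x + gradω x) :
    (∀ x y, f x + ⟪gradf x, y - x⟫ ≤ f y) ∧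
    (∀ x y, f y ≤ f x + ⟪gradf x, y - x⟫ + Lf / 2 * ‖y - x‖ ^ 2) := by
  have hn' : (0 : ℝ) < n := by exact_mod_cast hn
  have e : ∀ x y, f x + ⟪gradf x, y - x⟫
      = (n : ℝ)⁻¹ * ∑ j, (ψ j x + ⟪gradψ j x, y - x⟫) + (ω x + ⟪gradω x, y - x⟫) := by
    intro x y
    rw [hf, hgradf, inner_add_left, real_inner_smul_left, sum_inner, sum_add_distrib]
    ring
  refine ⟨fun x y => ?_, fun x y => ?_⟩
  · rw [e, hf y]
    refine add_le_add (mul_le_mul_of_nonneg_left (sum_le_sum fun j _ => ?_) (by positivity)) ?_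
    · exact aux_first_order (hψconv j) (hψdiff j) x y
    · exact aux_first_order hωconv hωdiff x y
  · rw [e, hf y]
    have h1 : (n : ℝ)⁻¹ * ∑ j, ψ j y
        ≤ (n : ℝ)⁻¹ * ∑ j, ((ψ j x + ⟪gradψ j x, y - x⟫) + Lψ / 2 * ‖y - x‖ ^ 2) :=
      mul_le_mul_of_nonneg_left (sum_le_sum fun j _ => aux_descent (hψdiff j) (hψlip j) x y)
        (by positivity)
    have h2 := aux_descent hωdiff hωlip x y
    rw [sum_add_distrib, mul_add, sum_const, card_univ, Fintype.card_fin, nsmul_eq_mul,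
      inv_mul_cancel_left₀ hn'.ne'] at h1
    rw [hLf]
    linarith

lemma aux_grad_eq {n : ℕ} (hn : 0 < n)
    (ψ : Fin n → EuclideanSpace ℝ (Fin p) → ℝ)
    (gradψ : Fin n → EuclideanSpace ℝ (Fin p) → EuclideanSpace ℝ (Fin p))
    (hψconv : ∀ i, ConvexOn ℝ Set.univ (ψ i))
    (hψdiff : ∀ i x, HasGradientAt (ψ i) (gradψ i x) x)
    (ω : EuclideanSpace ℝ (Fin p) → ℝ)
    (gradω : EuclideanSpace ℝ (Fin p) → EuclideanSpace ℝ (Fin p))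
    (hωconv : ConvexOn ℝ Set.univ ω)
    (hωdiff : ∀ x, HasGradientAt ω (gradω x) x)
    (Lf : ℝ) (hLfpos : 0 < Lf)
    (hψl : ∀ i x y, ‖gradψ i x - gradψ i y‖ ≤ Lf * ‖x - y‖)
    (f : EuclideanSpace ℝ (Fin p) → ℝ)
    (hf : ∀ x, f x = (n : ℝ)⁻¹ * ∑ j, ψ j x + ω x)
    (gradf : EuclideanSpace ℝ (Fin p) → EuclideanSpace ℝ (Fin p))
    (hgradf : ∀ x, gradf x = (n : ℝ)⁻¹ • ∑ j, gradψ j x + gradω x)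
    (g h : EuclideanSpace ℝ (Fin p) → EReal)
    (hg : ProperLscConvex g) (hh : ProperLscConvex h)
    (γ : ℝ) (hγ0 : 0 < γ)
    (xstar : EuclideanSpace ℝ (Fin p))
    (hxstar : ∀ x, ((f xstar : ℝ) : EReal) + g xstar + h xstar
        ≤ ((f x : ℝ) : EReal) + g x + h x)
    (ystar zs : EuclideanSpace ℝ (Fin p))
    (hph : IsProx γ h ystar zs)
    (hpg : IsProx γ g (2 • zs - ystar - γ • gradf zs) zs) :
    ∀ i, gradψ i xstar = gradψ i zs := by
  have hn' : (0 : ℝ) < n := by exact_mod_cast hn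
  have hgzs := aux_prox_ne_top hg hpg
  have hhzs := aux_prox_ne_top hh hph
  have h0 := hxstar zs
  rw [← EReal.coe_toReal hgzs (hg.ne_bot _), ← EReal.coe_toReal hhzs (hh.ne_bot _),
    ← EReal.coe_add, ← EReal.coe_add] at h0
  have hgx : g xstar ≠ ⊤ := by
    intro hc
    rw [hc, EReal.coe_add_top, EReal.top_add_of_ne_bot (hh.ne_bot _)] at h0
    exact EReal.coe_ne_top _ (top_le_iff.1 h0)
  have hhx : h xstar ≠ ⊤ := by
    intro hc
    rw [hc, ← EReal.coe_toReal hgx (hg.ne_bot _), ← EReal.coe_add, EReal.coe_add_top] at h0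
    exact EReal.coe_ne_top _ (top_le_iff.1 h0)
  rw [← EReal.coe_toReal hgx (hg.ne_bot _), ← EReal.coe_toReal hhx (hh.ne_bot _),
    ← EReal.coe_add, ← EReal.coe_add, EReal.coe_le_coe_iff] at h0
  have h1 := aux_prox hγ0 hg hpg hgx
  have h2 := aux_prox hγ0 hh hph hhx
  have e2 : γ⁻¹ • (2 • zs - ystar - γ • gradf zs - zs) = - (γ⁻¹ • (ystar - zs)) - gradf zs := by
    have : 2 • zs - ystar - γ • gradf zs - zs = - (ystar - zs) - γ • gradf zs := by
      rw [two_nsmul]; abel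
    rw [this, smul_sub, smul_neg, smul_smul, inv_mul_cancel₀ hγ0.ne', one_smul]
  rw [e2, inner_sub_left, inner_neg_left] at h1
  have h3 : f xstar - f zs - ⟪gradf zs, xstar - zs⟫ ≤ 0 := by linarith
  have e : f xstar - f zs - ⟪gradf zs, xstar - zs⟫
      = (n : ℝ)⁻¹ * ∑ j, (ψ j xstar - ψ j zs - ⟪gradψ j zs, xstar - zs⟫)
        + (ω xstar - ω zs - ⟪gradω zs, xstar - zs⟫) := by
    rw [hf, hf, hgradf, inner_add_left, real_inner_smul_left, sum_inner, sum_sub_distrib,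
      sum_sub_distrib]
    ring
  have hω0 := aux_first_order hωconv hωdiff zs xstar
  have hB : ∀ j, 0 ≤ ψ j xstar - ψ j zs - ⟪gradψ j zs, xstar - zs⟫ := fun j => by
    have := aux_first_order (hψconv j) (hψdiff j) zs xstar
    linarith
  have h4 : (n : ℝ)⁻¹ * ∑ j, (ψ j xstar - ψ j zs - ⟪gradψ j zs, xstar - zs⟫) ≤ 0 := by linarith
  have h5 : ∑ j, (ψ j xstar - ψ j zs - ⟪gradψ j zs, xstar - zs⟫) ≤ 0 := by
    rw [inv_mul_le_iff₀ hn', mul_zero] at h4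
    exact h4
  intro i
  have h6 := (single_le_sum (fun j _ => hB j) (mem_univ i)).trans h5
  have h7 := aux_breg hLfpos (hψconv i) (hψdiff i) (hψl i) zs xstar
  have h8 : ‖gradψ i xstar - gradψ i zs‖ ^ 2 ≤ 0 :=
    h7.trans (mul_nonpos_of_nonneg_of_nonpos (by positivity) h6)
  have h9 : ‖gradψ i xstar - gradψ i zs‖ = 0 := by
    have := sq_nonneg ‖gradψ i xstar - gradψ i zs‖
    exact pow_eq_zero_iff two_ne_zero |>.1 (le_antisymm h8 this)
  exact sub_eq_zero.1 (norm_eq_zero.1 h9)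

/-- Theorem 1, saddle-point rate of VR-TOS.  With step size `γ = 1/(3 L_f)`,
for every `(x, u) ∈ dom g × dom h*`, setting `y = x + γ u` and taking any fixed point `y*` of
`G_γ`, the ergodic iterates of VR-TOS with uniform q-memorization satisfy
`E[L(x̄_t, u) − L(x, ū_t)] ≤ (10n/(q(t+1))) [ (3 L_f q/(20n))‖y_0 − y‖²
  + (3 L_f q/(2n))‖y_0 − y*‖² + H_0 ]`. -/
theorem vrtos_saddle_point_rate
    {n : ℕ} (hn : 0 < n)
    (ψ : Fin n → EuclideanSpace ℝ (Fin p) → ℝ)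
    (gradψ : Fin n → EuclideanSpace ℝ (Fin p) → EuclideanSpace ℝ (Fin p))
    (Lψ : ℝ)
    (hψconv : ∀ i, ConvexOn ℝ Set.univ (ψ i))
    (hψdiff : ∀ i x, HasGradientAt (ψ i) (gradψ i x) x)
    (hψlip : ∀ i x y, ‖gradψ i x - gradψ i y‖ ≤ Lψ * ‖x - y‖)
    (ω : EuclideanSpace ℝ (Fin p) → ℝ)
    (gradω : EuclideanSpace ℝ (Fin p) → EuclideanSpace ℝ (Fin p))
    (Lω : ℝ)
    (hωconv : ConvexOn ℝ Set.univ ω)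
    (hωdiff : ∀ x, HasGradientAt ω (gradω x) x)
    (hωlip : ∀ x y, ‖gradω x - gradω y‖ ≤ Lω * ‖x - y‖)
    (Lf : ℝ) (hLf : Lf = Lψ + Lω) (hLfpos : 0 < Lf)
    (f : EuclideanSpace ℝ (Fin p) → ℝ)
    (hf : ∀ x, f x = (n : ℝ)⁻¹ * ∑ j, ψ j x + ω x)
    (gradf : EuclideanSpace ℝ (Fin p) → EuclideanSpace ℝ (Fin p))
    (hgradf : ∀ x, gradf x = (n : ℝ)⁻¹ • ∑ j, gradψ j x + gradω x)
    -- the nonsmooth terms, their proximal operators, and the qualification condition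
    (g h : EuclideanSpace ℝ (Fin p) → EReal)
    (hg : ProperLscConvex g) (hh : ProperLscConvex h)
    (hqual : (intrinsicInterior ℝ {x | g x ≠ ⊤} ∩ intrinsicInterior ℝ {x | h x ≠ ⊤}).Nonempty)
    -- the step size γ = 1/(3 L_f)
    (γ : ℝ) (hγ : γ = 1 / (3 * Lf))
    (proxg proxh : EuclideanSpace ℝ (Fin p) → EuclideanSpace ℝ (Fin p))
    (hproxg : ∀ x, IsProx γ g x (proxg x))
    (hproxh : ∀ x, IsProx γ h x (proxh x))
    -- a minimizer x* of the primal objective and a fixed point y* of G_γ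
    (xstar : EuclideanSpace ℝ (Fin p))
    (hxstar : ∀ x, ((f xstar : ℝ) : EReal) + g xstar + h xstar
        ≤ ((f x : ℝ) : EReal) + g x + h x)
    (ystar : EuclideanSpace ℝ (Fin p))
    (hfix : ystar - proxh ystar
        + proxg (2 • proxh ystar - ystar - γ • gradf (proxh ystar)) = ystar)
    -- the per-iteration randomness: the sampled index `sel s` and the uniform
    -- q-memorization update set `upd s`, drawn i.i.d. across iterations
    {S : Type} [Fintype S] [Inhabited S]
    (w : S → ℝ) (hw : ∀ s, 0 ≤ w s) (hw1 : ∑ s, w s = 1)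
    (sel : S → Fin n) (upd : S → Finset (Fin n)) (q : ℝ) (hq : 0 < q)
    (hmargsel : ∀ i : Fin n, ∑ s ∈ univ.filter (fun s => sel s = i), w s = 1 / n)
    (hmargupd : ∀ j : Fin n, ∑ s ∈ univ.filter (fun s => j ∈ upd s), w s = q / n)
    -- the VR-TOS process, as a function of the infinite sequence of draws
    (y z x v : ℕ → (ℕ → S) → EuclideanSpace ℝ (Fin p))
    (α : ℕ → Fin n → (ℕ → S) → EuclideanSpace ℝ (Fin p))
    (y0 : EuclideanSpace ℝ (Fin p)) (hy0 : ∀ r, y 0 r = y0)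
    (α0 : Fin n → EuclideanSpace ℝ (Fin p)) (hα0 : ∀ j r, α 0 j r = α0 j)
    (hz : ∀ t r, z t r = proxh (y t r))
    (hv : ∀ t r, v t r = gradψ (sel (r t)) (z t r) - α t (sel (r t)) r
        + (n : ℝ)⁻¹ • ∑ j, α t j r + gradω (z t r))
    (hx : ∀ t r, x t r = proxg (2 • z t r - y t r - γ • v t r))
    (hy : ∀ t r, y (t + 1) r = y t r + x t r - z t r)
    (hα : ∀ t j r, α (t + 1) j r
        = if j ∈ upd (r t) then gradψ j (z t r) else α t j r)
    -- the ergodic (averaged) primal and dual iterates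
    (xbar ubar : ℕ → (ℕ → S) → EuclideanSpace ℝ (Fin p))
    (hxbar : ∀ t r, xbar t r = ((t : ℝ) + 1)⁻¹ • ∑ k ∈ Finset.range (t + 1), x k r)
    (hubar : ∀ t r, ubar t r = ((t : ℝ) + 1)⁻¹ • ∑ k ∈ Finset.range (t + 1),
        γ⁻¹ • (y k r - z k r))
    (H0 : ℝ) (hH0 : H0 = 1 / (2 * n * Lf) * ∑ i, ‖α0 i - gradψ i xstar‖ ^ 2) :
    ∀ t : ℕ, ∀ xx uu : EuclideanSpace ℝ (Fin p), g xx ≠ ⊤ → fconj h uu ≠ ⊤ →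
      ∑ vdraw : Fin (t + 1) → S,
          ((prodW w (t + 1) vdraw : ℝ) : EReal)
            * (Lagr f g h (xbar t (extSeq (t + 1) vdraw)) uu
                - Lagr f g h xx (ubar t (extSeq (t + 1) vdraw)))
        ≤ ((10 * n / (q * (t + 1))
            * (3 * Lf * q / (20 * n) * ‖y0 - (xx + γ • uu)‖ ^ 2
              + 3 * Lf * q / (2 * n) * ‖y0 - ystar‖ ^ 2 + H0) : ℝ) : EReal) := by
  have hn' : (0 : ℝ) < n := by exact_mod_cast hn
  have hγ0 : 0 < γ := by rw [hγ]; positivity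
  have hψl : ∀ i x y, ‖gradψ i x - gradψ i y‖ ≤ Lf * ‖x - y‖ := by
    intro i x y
    have h1 := hψlip i x y
    have h2 := (norm_nonneg _).trans (hωlip x y)
    rw [hLf, add_mul]; linarith
  obtain ⟨hffo, hfdesc⟩ := aux_f hn ψ gradψ Lψ hψconv hψdiff hψlip ω gradω Lω hωconv hωdiff hωlip
    Lf hLf f hf gradf hgradf
  -- the fixed point
  obtain ⟨zs, hzs⟩ : ∃ zs, zs = proxh ystar := ⟨_, rfl⟩
  rw [← hzs] at hfix
  have hph : IsProx γ h ystar zs := hzs ▸ hproxh ystar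
  have hpg : IsProx γ g (2 • zs - ystar - γ • gradf zs) zs := by
    have h1 := hproxg (2 • zs - ystar - γ • gradf zs)
    have h2 : proxg (2 • zs - ystar - γ • gradf zs) = zs := by
      have h3 : proxg (2 • zs - ystar - γ • gradf zs) = ystar - (ystar - zs) :=
        eq_sub_of_add_eq' hfix
      rw [h3]; abel
    rwa [h2] at h1
  have hgzs := aux_prox_ne_top hg hpg
  have hhzs := aux_prox_ne_top hh hph
  have hxs : ∀ i, gradψ i xstar = gradψ i zs :=
    aux_grad_eq hn ψ gradψ hψconv hψdiff ω gradω hωconv hωdiff Lf hLfpos hψl f hf gradf hgradf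
      g h hg hh γ hγ0 xstar hxstar ystar zs hph hpg
  -- adaptedness
  have hadapt : ∀ k m r s, k ≤ m → y k (Function.update r m s) = y k r ∧
      ∀ j, α k j (Function.update r m s) = α k j r := by
    intro k
    induction k with
    | zero => intro m r s _; simp [hy0, hα0]
    | succ k ih =>
      intro m r s hkm
      obtain ⟨h1, h2⟩ := ih m r s (by omega)
      have hr : Function.update r m s k = r k := Function.update_of_ne (by omega) _ _
      have hz' : z k (Function.update r m s) = z k r := by rw [hz, hz, h1]
      have hv' : v k (Function.update r m s) = v k r := by
        rw [hv, hv, hr, hz', h2]; simp_rw [h2]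
      have hx' : x k (Function.update r m s) = x k r := by rw [hx, hx, hz', hv', h1]
      refine ⟨by rw [hy, hy, h1, hx', hz'], fun j => ?_⟩
      rw [hα, hα, hr, hz', h2]
  intro t xx uu hxx huu
  have hgx : ∀ k r, g (x k r) ≠ ⊤ := fun k r => by rw [hx]; exact aux_prox_ne_top hg (hproxg _)
  have hhz : ∀ k r, h (z k r) ≠ ⊤ := fun k r => by rw [hz]; exact aux_prox_ne_top hh (hproxh _)
  have hub : fconj h uu ≠ ⊥ := by
    obtain ⟨z1, hz1⟩ := hh.proper
    exact ne_bot_of_le_ne_bot (EReal.coe_ne_bot _) (aux_fconj_ge hz1 (hh.ne_bot z1) uu)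
  obtain ⟨d, hd⟩ : ∃ d : ℝ, fconj h uu = (d : EReal) := ⟨_, (EReal.coe_toReal huu hub).symm⟩
  have hdge : ∀ k r, ⟪z k r, uu⟫ - (h (z k r)).toReal ≤ d := by
    intro k r
    have := aux_fconj_ge (hhz k r) (hh.ne_bot _) uu
    rw [hd] at this
    exact_mod_cast this
  obtain ⟨gap, hgap⟩ : ∃ gap : ℕ → (ℕ → S) → ℝ, ∀ k r, gap k r =
      f (x k r) + (g (x k r)).toReal + ⟪x k r, uu⟫ - d - (f xx + (g xx).toReal
        + ⟪xx, γ⁻¹ • (y k r - z k r)⟫ - (⟪z k r, γ⁻¹ • (y k r - z k r)⟫ - (h (z k r)).toReal)) :=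
    ⟨_, fun _ _ => rfl⟩
  obtain ⟨V, hV⟩ : ∃ V : ℕ → (ℕ → S) → ℝ, ∀ k r, V k r =
      3 * Lf / 2 * ‖y k r - (xx + γ • uu)‖ ^ 2 + 10 * (3 * Lf / 2 * ‖y k r - ystar‖ ^ 2)
        + 5 / (q * Lf) * ∑ i, ‖α k i r - gradψ i zs‖ ^ 2 := ⟨_, fun _ _ => rfl⟩
  have hV0 : ∀ k r, 0 ≤ V k r := by
    intro k r
    rw [hV]
    have : 0 ≤ ∑ i, ‖α k i r - gradψ i zs‖ ^ 2 := sum_nonneg fun i _ => by positivity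
    positivity
  -- one-step inequality
  have hstep : ∀ k r, ∑ s, w s * (gap k (Function.update r k s) + V (k + 1) (Function.update r k s))
      ≤ V k r := by
    intro k r
    obtain ⟨vv, hvv⟩ : ∃ vv : Fin n → EuclideanSpace ℝ (Fin p), ∀ i, vv i =
      gradψ i (z k r) - α k i r + (n : ℝ)⁻¹ • ∑ j, α k j r + gradω (z k r) := ⟨_, fun _ => rfl⟩
    have havg := aux_avg hn hLfpos (fun i => gradψ i (z k r)) (fun i => gradψ i zs)
      (fun i => α k i r) (gradω (z k r)) (gradω zs) (z k r - zs) (z k r - xx)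
      (gradf (z k r)) (gradf zs) vv hvv (hgradf _) (hgradf _)
      (fun i => aux_coco (F := fun x => ψ i x + ω x) (G := fun x => gradψ i x + gradω x) hLfpos
        ((hψconv i).add hωconv)
        (fun x => by
          have := (hψdiff i x).hasFDerivAt.add (hωdiff x).hasFDerivAt
          rw [← map_add] at this
          exact this)
        (fun a b => by
          have e : gradψ i a + gradω a - (gradψ i b + gradω b)
            = (gradψ i a - gradψ i b) + (gradω a - gradω b) := by abel
          rw [e, hLf, add_mul]
          exact (norm_add_le _ _).trans (add_le_add (hψlip i a b) (hωlip a b))) (z k r) zs)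
      (fun i => aux_coco hLfpos (hψconv i) (hψdiff i) (hψl i) (z k r) zs)
      (aux_mono hωconv hωdiff (z k r) zs)
    obtain ⟨φ, hφ⟩ : ∃ φ : Fin n → ℝ, ∀ i, φ i =
      ⟪gradf (z k r) - vv i, z k r - xx⟫ + 1 / (4 * Lf) * ‖gradf (z k r) - vv i‖ ^ 2
        - 10 * (⟪vv i - gradf zs, z k r - zs⟫ - 1 / (6 * Lf) * ‖vv i - gradf zs‖ ^ 2) :=
      ⟨_, fun _ => rfl⟩
    simp_rw [← hφ] at havg
    have hpt : ∀ s, gap k (Function.update r k s) + V (k + 1) (Function.update r k s)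
        ≤ (3 * Lf / 2 * ‖y k r - (xx + γ • uu)‖ ^ 2 + 10 * (3 * Lf / 2 * ‖y k r - ystar‖ ^ 2))
          + φ (sel s) + 5 / (q * Lf) * ∑ i, (if i ∈ upd s then ‖gradψ i (z k r) - gradψ i zs‖ ^ 2
            else ‖α k i r - gradψ i zs‖ ^ 2) := by
      intro s
      obtain ⟨r', hr'⟩ : ∃ r', r' = Function.update r k s := ⟨_, rfl⟩
      rw [← hr']
      obtain ⟨h1, h2⟩ := hadapt k k r s le_rfl
      rw [← hr'] at h1
      simp_rw [← hr'] at h2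
      have hrk : r' k = s := by rw [hr', Function.update_self]
      have hz' : z k r' = z k r := by rw [hz, hz, h1]
      have hv' : v k r' = vv (sel s) := by
        rw [hv, hvv, hrk, hz', h2]; simp_rw [h2]
      have hxp : IsProx γ g (2 • z k r - y k r - γ • vv (sel s)) (x k r') := by
        rw [hx, hz', h1, hv']; exact hproxg _
      have hzp : IsProx γ h (y k r) (z k r) := by rw [hz]; exact hproxh _
      have s1 := aux_step1 hLfpos hγ (y k r) (z k r) (x k r') (vv (sel s)) (gradf (z k r)) xx uu
        (f (x k r')) (f (z k r)) (f xx) (g (x k r')).toReal (g xx).toReal (h (z k r)).toReal d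
        (aux_prox hγ0 hg hxp hxx) (hfdesc _ _) (hffo _ _) (hdge k r)
      have s2 := aux_step2 hLfpos hγ (y k r) (z k r) (x k r') (vv (sel s)) (gradf zs) ystar zs
        (g (x k r')).toReal (g zs).toReal (h (z k r)).toReal (h zs).toReal
        (aux_prox hγ0 hg hxp hgzs) (aux_prox hγ0 hg hpg (hgx k r'))
        (aux_prox hγ0 hh hzp hhzs) (aux_prox hγ0 hh hph (hhz k r))
      have s3 : ∑ i, ‖α (k + 1) i r' - gradψ i zs‖ ^ 2
          = ∑ i, (if i ∈ upd s then ‖gradψ i (z k r) - gradψ i zs‖ ^ 2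
            else ‖α k i r - gradψ i zs‖ ^ 2) := by
        refine sum_congr rfl fun i _ => ?_
        rw [hα, hrk, hz', h2]
        split_ifs <;> rfl
      rw [hgap, hV, s3, hy, hz', h1, hφ]
      linarith
    refine (sum_le_sum fun s _ => mul_le_mul_of_nonneg_left (hpt s) (hw s)).trans ?_
    simp only [mul_add, sum_add_distrib, ← sum_mul, hw1]
    rw [aux_sel w sel hmargsel φ]
    have s4 : ∑ s, w s * (5 / (q * Lf) * ∑ i, (if i ∈ upd s then ‖gradψ i (z k r) - gradψ i zs‖ ^ 2
            else ‖α k i r - gradψ i zs‖ ^ 2))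
        = 5 / (q * Lf) * (q / n * ∑ i, ‖gradψ i (z k r) - gradψ i zs‖ ^ 2
          + (1 - q / n) * ∑ i, ‖α k i r - gradψ i zs‖ ^ 2) := by
      have u1 : q / n * ∑ i, ‖gradψ i (z k r) - gradψ i zs‖ ^ 2
          + (1 - q / n) * ∑ i, ‖α k i r - gradψ i zs‖ ^ 2
          = ∑ i, ∑ s, w s * (if i ∈ upd s then ‖gradψ i (z k r) - gradψ i zs‖ ^ 2
            else ‖α k i r - gradψ i zs‖ ^ 2) := by
        rw [mul_sum, mul_sum, ← sum_add_distrib]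
        exact sum_congr rfl fun i _ => (aux_upd w hw1 upd q hmargupd i _ _).symm
      rw [u1, sum_comm, mul_sum]
      refine sum_congr rfl fun s _ => ?_
      rw [← mul_sum]; ring
    rw [s4, hV]
    have s5 : (n : ℝ)⁻¹ * (∑ i, φ i + 5 / Lf * (∑ i, ‖gradψ i (z k r) - gradψ i zs‖ ^ 2
        - ∑ i, ‖α k i r - gradψ i zs‖ ^ 2)) ≤ 0 :=
      mul_nonpos_of_nonneg_of_nonpos (by positivity) havg
    have s6 : 5 / (q * Lf) * (q / n * ∑ i, ‖gradψ i (z k r) - gradψ i zs‖ ^ 2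
          + (1 - q / n) * ∑ i, ‖α k i r - gradψ i zs‖ ^ 2)
        = (n : ℝ)⁻¹ * (5 / Lf * (∑ i, ‖gradψ i (z k r) - gradψ i zs‖ ^ 2
        - ∑ i, ‖α k i r - gradψ i zs‖ ^ 2)) + 5 / (q * Lf) * ∑ i, ‖α k i r - gradψ i zs‖ ^ 2 := by
      field_simp
      ring
    rw [s6]
    linarith
  -- expectation
  have hW0 : ∀ vd, 0 ≤ prodW w (t + 1) vd := fun vd => prod_nonneg fun k _ => hw _
  have hWsum : ∑ vd : Fin (t + 1) → S, prodW w (t + 1) vd = 1 := by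
    have := Finset.prod_univ_sum (fun _ : Fin (t + 1) => (univ : Finset S)) (fun _ s => w s)
    simp only [hw1, prod_const_one, Fintype.piFinset_univ] at this
    exact this.symm
  obtain ⟨EE, hEE⟩ : ∃ EE : ((ℕ → S) → ℝ) → ℝ, ∀ F, EE F =
    ∑ vd : Fin (t + 1) → S, prodW w (t + 1) vd * F (extSeq (t + 1) vd) := ⟨_, fun _ => rfl⟩
  have hEstep : ∀ k, k < t + 1 → EE (gap k) ≤ EE (V k) - EE (V (k + 1)) := by
    intro k hk
    have h1 := aux_resample w hw1 (t + 1) k hk (fun r => gap k r + V (k + 1) r)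
    have h2 : ∑ vd : Fin (t + 1) → S, prodW w (t + 1) vd *
        (gap k (extSeq (t + 1) vd) + V (k + 1) (extSeq (t + 1) vd)) ≤ EE (V k) := by
      rw [h1, hEE]
      exact sum_le_sum fun vd _ => mul_le_mul_of_nonneg_left (hstep k _) (hW0 vd)
    simp only [mul_add, sum_add_distrib] at h2
    rw [hEE (gap k), hEE (V (k + 1))]
    linarith
  have hEsum : ∀ m, m ≤ t + 1 → ∑ k ∈ range m, EE (gap k) ≤ EE (V 0) - EE (V m) := by
    intro m
    induction m with
    | zero => simp
    | succ m ih =>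
      intro hm
      rw [sum_range_succ]
      have := ih (by omega)
      have := hEstep m (by omega)
      linarith
  have hEfin := hEsum (t + 1) le_rfl
  have hEV : 0 ≤ EE (V (t + 1)) := by
    rw [hEE]; exact sum_nonneg fun vd _ => mul_nonneg (hW0 vd) (hV0 _ _)
  have hEV0 : EE (V 0) = 3 * Lf / 2 * ‖y0 - (xx + γ • uu)‖ ^ 2
      + 10 * (3 * Lf / 2 * ‖y0 - ystar‖ ^ 2) + 5 / (q * Lf) * ∑ i, ‖α0 i - gradψ i zs‖ ^ 2 := by
    rw [hEE]
    simp only [hV, hy0, hα0]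
    rw [← sum_mul, hWsum, one_mul]
  -- pathwise Jensen
  have hpath : ∀ r, ∃ R : ℝ, Lagr f g h (xbar t r) uu - Lagr f g h xx (ubar t r) = (R : EReal) ∧
      R ≤ ((t : ℝ) + 1)⁻¹ * ∑ k ∈ range (t + 1), gap k r := by
    intro r
    have hT : (0 : ℝ) < (t : ℝ) + 1 := by positivity
    have hcsum : ∑ k ∈ range (t + 1), ((t : ℝ) + 1)⁻¹ = 1 := by
      rw [sum_const, card_range, nsmul_eq_mul]; push_cast; exact mul_inv_cancel₀ hT.ne'
    have hxb : xbar t r = ∑ k ∈ range (t + 1), ((t : ℝ) + 1)⁻¹ • x k r := by rw [hxbar, smul_sum]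
    have hub' : ubar t r = ∑ k ∈ range (t + 1), ((t : ℝ) + 1)⁻¹ • γ⁻¹ • (y k r - z k r) := by
      rw [hubar, smul_sum]
    have hco := aux_convexOn hg
    have hgm : g (xbar t r) ≠ ⊤ := by
      rw [hxb]
      exact hco.1.sum_mem (fun _ _ => by positivity) hcsum (fun k _ => hgx k r)
    have hgJ : (g (xbar t r)).toReal ≤ ∑ k ∈ range (t + 1), ((t : ℝ) + 1)⁻¹ * (g (x k r)).toReal := by
      rw [hxb]
      exact hco.map_sum_le (fun _ _ => by positivity) hcsum (fun k _ => hgx k r)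
    have hfJ : f (xbar t r) ≤ ∑ k ∈ range (t + 1), ((t : ℝ) + 1)⁻¹ * f (x k r) := by
      have h1 : ∑ k ∈ range (t + 1), ((t : ℝ) + 1)⁻¹ * (f (xbar t r)
          + ⟪gradf (xbar t r), x k r - xbar t r⟫) ≤ ∑ k ∈ range (t + 1), ((t : ℝ) + 1)⁻¹ * f (x k r) :=
        sum_le_sum fun k _ => mul_le_mul_of_nonneg_left (hffo _ _) (by positivity)
      refine le_trans (le_of_eq ?_) h1
      simp only [mul_add, sum_add_distrib, ← sum_mul, hcsum, one_mul, ← real_inner_smul_right,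
        ← inner_sum, smul_sub, sum_sub_distrib, ← sum_smul, one_smul]
      rw [← hxb, sub_self, inner_zero_right, add_zero]
    obtain ⟨c, hc⟩ : ∃ c : ℕ → ℝ, ∀ k, c k = ⟪z k r, γ⁻¹ • (y k r - z k r)⟫ - (h (z k r)).toReal :=
      ⟨_, fun _ => rfl⟩
    have hcle : fconj h (ubar t r) ≤ ((∑ k ∈ range (t + 1), ((t : ℝ) + 1)⁻¹ * c k : ℝ) : EReal) := by
      refine aux_fconj_le hh _ _ fun a ha => ?_
      have h1 : ∑ k ∈ range (t + 1), ((t : ℝ) + 1)⁻¹ * (⟪a, γ⁻¹ • (y k r - z k r)⟫ - (h a).toReal)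
          ≤ ∑ k ∈ range (t + 1), ((t : ℝ) + 1)⁻¹ * c k := by
        refine sum_le_sum fun k _ => mul_le_mul_of_nonneg_left ?_ (by positivity)
        have hzp : IsProx γ h (y k r) (z k r) := by rw [hz]; exact hproxh _
        have := aux_prox hγ0 hh hzp ha
        rw [inner_sub_right] at this
        rw [hc, real_inner_comm, real_inner_comm _ (z k r)]
        linarith
      refine le_trans (le_of_eq ?_) h1
      rw [hub', inner_sum]
      simp only [mul_sub, sum_sub_distrib, ← sum_mul, hcsum, one_mul]
      simp only [real_inner_smul_right]
    have hctop : fconj h (ubar t r) ≠ ⊤ := ne_top_of_le_ne_top (EReal.coe_ne_top _) hcle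
    have hcbot : fconj h (ubar t r) ≠ ⊥ :=
      ne_bot_of_le_ne_bot (EReal.coe_ne_bot _) (aux_fconj_ge (hhz 0 r) (hh.ne_bot _) (ubar t r))
    refine ⟨f (xbar t r) + (g (xbar t r)).toReal + ⟪xbar t r, uu⟫ - d
      - (f xx + (g xx).toReal + ⟪xx, ubar t r⟫ - (fconj h (ubar t r)).toReal), ?_, ?_⟩
    · unfold Lagr
      rw [hd]
      simp only [EReal.coe_sub, EReal.coe_add]
      rw [EReal.coe_toReal hgm (hg.ne_bot _), EReal.coe_toReal hxx (hg.ne_bot _),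
        EReal.coe_toReal hctop hcbot]
    · rw [← EReal.coe_toReal hctop hcbot, EReal.coe_le_coe_iff] at hcle
      have i1 : ⟪xbar t r, uu⟫ = ∑ k ∈ range (t + 1), ((t : ℝ) + 1)⁻¹ * ⟪x k r, uu⟫ := by
        rw [hxb, sum_inner]; simp only [real_inner_smul_left]
      have i2 : ⟪xx, ubar t r⟫ = ∑ k ∈ range (t + 1), ((t : ℝ) + 1)⁻¹ * ⟪xx, γ⁻¹ • (y k r - z k r)⟫ := by
        rw [hub', inner_sum]; simp only [real_inner_smul_right]
      have i3 : ((t : ℝ) + 1)⁻¹ * ∑ k ∈ range (t + 1), gap k r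
          = ∑ k ∈ range (t + 1), ((t : ℝ) + 1)⁻¹ * f (x k r)
            + ∑ k ∈ range (t + 1), ((t : ℝ) + 1)⁻¹ * (g (x k r)).toReal
            + ∑ k ∈ range (t + 1), ((t : ℝ) + 1)⁻¹ * ⟪x k r, uu⟫ - d
            - (f xx + (g xx).toReal
            + ∑ k ∈ range (t + 1), ((t : ℝ) + 1)⁻¹ * ⟪xx, γ⁻¹ • (y k r - z k r)⟫
            - ∑ k ∈ range (t + 1), ((t : ℝ) + 1)⁻¹ * c k) := by
        simp only [hgap, ← hc]
        rw [mul_sum]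
        simp only [mul_add, mul_sub, sum_add_distrib, sum_sub_distrib]
        simp only [← sum_mul, hcsum, one_mul]
      rw [i3, i1, i2]
      linarith
  choose R hR1 hR2 using hpath
  simp_rw [hR1, ← EReal.coe_mul]
  rw [← aux_coe_sum, EReal.coe_le_coe_iff]
  have hfin1 : ∑ vd : Fin (t + 1) → S, prodW w (t + 1) vd * R (extSeq (t + 1) vd)
      ≤ ((t : ℝ) + 1)⁻¹ * ∑ k ∈ range (t + 1), EE (gap k) := by
    simp_rw [hEE]
    rw [sum_comm, mul_sum]
    refine sum_le_sum fun vd _ => ?_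
    rw [← mul_sum, mul_left_comm]
    exact mul_le_mul_of_nonneg_left (hR2 _) (hW0 vd)
  refine hfin1.trans ?_
  have hfin2 : ((t : ℝ) + 1)⁻¹ * ∑ k ∈ range (t + 1), EE (gap k) ≤ ((t : ℝ) + 1)⁻¹ * EE (V 0) :=
    mul_le_mul_of_nonneg_left (by linarith) (by positivity)
  refine hfin2.trans (le_of_eq ?_)
  rw [hEV0, hH0]
  simp_rw [hxs]
  have hT : (0 : ℝ) < (t : ℝ) + 1 := by positivity
  field_simp
  ring
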